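/- Let ϑ₀, ϑ₁, ϑ₂ be Beurling weights on ℝ^d with ϑ₁ ≺ ϑ₀, and let 1 < p, q, r < ∞. Then A^{p,1,q,r}_{ϑ₁,ϑ₂}(ℝ^d) is a Banach L¹_{ϑ₀}(ℝ^d)-module under convolution: there exists a constant C > 0 such that for every f ∈ A^{p,1,q,r}_{ϑ₁,ϑ₂}(ℝ^d) and every g ∈ L¹_{ϑ₀}(ℝ^d), the convolution f∗g belongs to A^{p,1,q,r}_{ϑ₁,ϑ₂}(ℝ^d) and ‖f∗g‖_A ≤ C·‖f‖_A·‖g‖_{1,ϑ₀}. -/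

import Mathlib

open MeasureTheory Filter Topology
open scoped ENNReal NNReal BigOperators

noncomputable section

/-- The unit cube `α + [0,1)^d` at the integer point `α ∈ ℤ^d`. -/
def cube {d : ℕ} (α : Fin d → ℤ) : Set (Fin d → ℝ) :=
  Set.univ.pi fun i => Set.Ico (α i : ℝ) ((α i : ℝ) + 1)

/-- The weighted amalgam norm `‖f‖_{pq,ω}` of the space `(L^p_ω, ℓ^q)`. -/
def amalgamNorm {d : ℕ} (p q : ℝ) (ω : (Fin d → ℝ) → ℝ) (f : (Fin d → ℝ) → ℂ) : ℝ≥0∞ :=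
  (∑' α : Fin d → ℤ,
      (eLpNorm (fun x => ω x • f x) (ENNReal.ofReal p) (volume.restrict (cube α))) ^ q) ^ (1 / q)

/-- Membership in the weighted amalgam space `(L^p_ω, ℓ^q)`. -/
def MemAmalgam {d : ℕ} (p q : ℝ) (ω : (Fin d → ℝ) → ℝ) (f : (Fin d → ℝ) → ℂ) : Prop :=
  Measurable f ∧ amalgamNorm p q ω f < ⊤

/-- A Beurling weight: measurable, `ϑ ≥ 1` and submultiplicative. -/
def IsBeurling {d : ℕ} (ϑ : (Fin d → ℝ) → ℝ) : Prop :=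
  Measurable ϑ ∧ (∀ x, 1 ≤ ϑ x) ∧ ∀ x y, ϑ (x + y) ≤ ϑ x * ϑ y

/-- The Fourier transform `f̂(ξ) = ∫ f(x) e^{-2πi⟨x,ξ⟩} dx`. -/
def fourierT {d : ℕ} (f : (Fin d → ℝ) → ℂ) (ξ : Fin d → ℝ) : ℂ :=
  ∫ x : Fin d → ℝ,
    Complex.exp (-(2 * (Real.pi : ℂ) * Complex.I * ∑ i, (x i : ℂ) * (ξ i : ℂ))) * f x

/-- The norm of `A^{p,1,q,r}_{ϑ₁,ϑ₂}(ℝ^d)`. -/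
def ANorm {d : ℕ} (p q r : ℝ) (ϑ₁ ϑ₂ : (Fin d → ℝ) → ℝ) (f : (Fin d → ℝ) → ℂ) : ℝ≥0∞ :=
  amalgamNorm p 1 ϑ₁ f + amalgamNorm q r ϑ₂ (fourierT f)

/-- Membership in `A^{p,1,q,r}_{ϑ₁,ϑ₂}(ℝ^d)`. -/
def MemA {d : ℕ} (p q r : ℝ) (ϑ₁ ϑ₂ : (Fin d → ℝ) → ℝ) (f : (Fin d → ℝ) → ℂ) : Prop :=
  MemAmalgam p 1 ϑ₁ f ∧ MemAmalgam q r ϑ₂ (fourierT f)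

/-- Convolution `(f∗g)(x) = ∫ f(x−t)g(t) dt`. -/
def convF {d : ℕ} (f g : (Fin d → ℝ) → ℂ) (x : Fin d → ℝ) : ℂ :=
  ∫ t : Fin d → ℝ, f (x - t) * g t

/-- `ϑ ≺ ϑ'` : domination of weights up to a constant. -/
def Prec {d : ℕ} (ϑ ϑ' : (Fin d → ℝ) → ℝ) : Prop :=
  ∃ C : ℝ, 0 < C ∧ ∀ x, ϑ x ≤ C * ϑ' x

/-- The Beurling–Domar condition `∑_{n≥1} log ϑ(nx)/n² < ∞`. -/
def BeurlingDomar {d : ℕ} (ϑ : (Fin d → ℝ) → ℝ) : Prop :=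
  ∀ x : Fin d → ℝ, Summable fun n : ℕ => Real.log (ϑ ((n : ℝ) • x)) / (n : ℝ) ^ 2

/-- `w` does not tend to zero as `|x| → ∞`. -/
def NotVanishingAtInfty {d : ℕ} (w : (Fin d → ℝ) → ℝ) : Prop :=
  ∃ δ : ℝ, 0 < δ ∧ ∀ R : ℝ, 0 < R → ∃ x : Fin d → ℝ, R < ‖x‖ ∧ δ ≤ w x

end

/-!
A shifted unit cube meets at most `2 ^ d` cubes of the integer grid, so translations have norm at
most `2 ^ d` on every amalgam space. A convolution is an average of translates, and Minkowski's
integral inequality, applied first in `L^p` on each cube and then in `ℓ^q` over the grid, bounds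
its amalgam norm by `2 ^ d` times the mass of the other factor. Submultiplicativity,
`ϑ x ≤ ϑ (x - t) * ϑ t`, distributes the weight over both factors.

Cubes have measure one, so amalgam functions with global exponent one are integrable. On the
Fourier side the transform of `f ∗ g` is therefore the product of the transforms, where that of `g`
is bounded by `‖g‖₁`.
-/

section Minkowski

variable {X T : Type*} [MeasurableSpace X] [MeasurableSpace T] {μ : Measure X} {ν : Measure T}

theorem lintegral_rpow_le_mul_lintegral_weight {p : ℝ} (hp : 1 ≤ p) {k c : T → ℝ≥0∞}
    (hk : Measurable k) (hc : Measurable c) (hc_fin : ∫⁻ t, c t ∂ν ≠ ∞)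
    (hkc : ∀ᵐ t ∂ν, c t = 0 → k t = 0) :
    (∫⁻ t, k t ∂ν) ^ p ≤ (∫⁻ t, c t ^ (1 - p) * k t ^ p ∂ν) * (∫⁻ t, c t ∂ν) ^ (p - 1) := by
  have hp0 : 0 < p := zero_lt_one.trans_le hp
  have split : ∀ᵐ t ∂ν, k t ≤ (c t ^ (1 - p) * k t ^ p) ^ (1 / p) * c t ^ (1 - 1 / p) := by
    filter_upwards [hkc, ae_lt_top hc hc_fin] with t hzero hlt
    obtain h0 | h0 := eq_or_ne (c t) 0
    · simp [hzero h0]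
    have hexp : (1 - p) * (1 / p) + (1 - 1 / p) = 0 := by field_simp; ring
    rw [ENNReal.mul_rpow_of_nonneg _ _ (by positivity), ← ENNReal.rpow_mul, ← ENNReal.rpow_mul,
      mul_one_div_cancel hp0.ne', ENNReal.rpow_one, mul_right_comm,
      ← ENNReal.rpow_add _ _ h0 hlt.ne, hexp, ENNReal.rpow_zero, one_mul]
  have hexp_nonneg : 0 ≤ 1 - 1 / p := sub_nonneg.2 ((div_le_one hp0).2 hp)
  calc (∫⁻ t, k t ∂ν) ^ p
      ≤ ((∫⁻ t, c t ^ (1 - p) * k t ^ p ∂ν) ^ (1 / p) * (∫⁻ t, c t ∂ν) ^ (1 - 1 / p)) ^ p := by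
        gcongr
        exact (lintegral_mono_ae split).trans <| ENNReal.lintegral_mul_norm_pow_le
          ((hc.pow_const _).mul (hk.pow_const _)).aemeasurable hc.aemeasurable
          (by positivity) hexp_nonneg (by ring)
    _ = (∫⁻ t, c t ^ (1 - p) * k t ^ p ∂ν) * (∫⁻ t, c t ∂ν) ^ (p - 1) := by
        rw [ENNReal.mul_rpow_of_nonneg _ _ hp0.le, ← ENNReal.rpow_mul, ← ENNReal.rpow_mul,
          one_div_mul_cancel hp0.ne', ENNReal.rpow_one, sub_mul, one_div_mul_cancel hp0.ne',
          one_mul]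

theorem rpow_one_sub_mul_rpow_le {p : ℝ} (hp : 1 ≤ p) (c : ℝ≥0∞) :
    c ^ (1 - p) * c ^ p ≤ c := by
  obtain rfl | h0 := eq_or_ne c 0
  · simp [ENNReal.zero_rpow_of_pos (zero_lt_one.trans_le hp)]
  obtain rfl | htop := eq_or_ne c ∞
  · exact le_top
  rw [← ENNReal.rpow_add _ _ h0 htop, sub_add_cancel, ENNReal.rpow_one]

variable [SFinite μ]

theorem measurable_eLpNorm_section {p : ℝ≥0∞} (hp_top : p ≠ ∞) {K : X → T → ℝ≥0∞}
    (hK : Measurable (Function.uncurry K)) : Measurable fun t => eLpNorm (K · t) p μ := by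
  obtain rfl | hp := eq_or_ne p 0
  · simp
  simp only [eLpNorm_eq_lintegral_rpow_enorm_toReal hp hp_top, enorm_eq_self]
  exact (hK.pow_const _).lintegral_prod_left'.pow_const _

variable [SFinite ν]

theorem ae_ae_eq_zero_of_eLpNorm_section_eq_zero {p : ℝ≥0∞} (hp : p ≠ 0) (hp_top : p ≠ ∞)
    {K : X → T → ℝ≥0∞} (hK : Measurable (Function.uncurry K)) :
    ∀ᵐ x ∂μ, ∀ᵐ t ∂ν, eLpNorm (K · t) p μ = 0 → K x t = 0 := by
  have hmeas : MeasurableSet {z : X × T | eLpNorm (K · z.2) p μ = 0 → K z.1 z.2 = 0} :=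
    ((measurable_eLpNorm_section hp_top hK).comp measurable_snd (measurableSet_singleton 0)).imp
      (hK (measurableSet_singleton 0))
  refine (Measure.ae_ae_comm hmeas).2 (Eventually.of_forall fun t => ?_)
  have hKt : AEStronglyMeasurable (K · t) μ :=
    (hK.comp measurable_prodMk_right).aestronglyMeasurable
  by_cases h : eLpNorm (K · t) p μ = 0
  · exact ((eLpNorm_eq_zero_iff hKt hp).1 h).mono fun _ hx _ => hx
  · exact Eventually.of_forall fun _ h0 => absurd h0 h

theorem eLpNorm_lintegral_le_lintegral_eLpNorm {p : ℝ≥0∞} (hp : 1 ≤ p) (hp_top : p ≠ ∞)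
    {K : X → T → ℝ≥0∞} (hK : Measurable (Function.uncurry K)) :
    eLpNorm (fun x => ∫⁻ t, K x t ∂ν) p μ ≤ ∫⁻ t, eLpNorm (K · t) p μ ∂ν := by
  have hp0 : p ≠ 0 := (zero_lt_one.trans_le hp).ne'
  set s := p.toReal
  have hs : 1 ≤ s := by simpa using ENNReal.toReal_mono hp_top hp
  have hs0 : 0 < s := zero_lt_one.trans_le hs
  -- Weighting Hölder's inequality by `c` makes the `x`-integral of the bound at most `(∫ c) ^ s`.
  set c : T → ℝ≥0∞ := fun t => eLpNorm (K · t) p μ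
  have hc : Measurable c := measurable_eLpNorm_section hp_top hK
  obtain hc_top | hc_fin := eq_or_ne (∫⁻ t, c t ∂ν) ∞
  · exact hc_top ▸ le_top
  have c_rpow (t : T) : ∫⁻ x, K x t ^ s ∂μ = c t ^ s := by
    simp [c, eLpNorm_eq_lintegral_rpow_enorm_toReal hp0 hp_top, ENNReal.rpow_inv_rpow hs0.ne', s]
  have K_eq_zero : ∀ᵐ x ∂μ, ∀ᵐ t ∂ν, c t = 0 → K x t = 0 :=
    ae_ae_eq_zero_of_eLpNorm_section_eq_zero hp0 hp_top hK
  have weighted : Measurable fun z : X × T => c z.2 ^ (1 - s) * K z.1 z.2 ^ s :=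
    ((hc.comp measurable_snd).pow_const _).mul (hK.pow_const _)
  rw [eLpNorm_eq_lintegral_rpow_enorm_toReal hp0 hp_top, one_div, ENNReal.rpow_inv_le_iff hs0]
  calc ∫⁻ x, ‖∫⁻ t, K x t ∂ν‖ₑ ^ s ∂μ
      ≤ ∫⁻ x, (∫⁻ t, c t ^ (1 - s) * K x t ^ s ∂ν) * (∫⁻ t, c t ∂ν) ^ (s - 1) ∂μ :=
        lintegral_mono_ae <| K_eq_zero.mono fun x hx => lintegral_rpow_le_mul_lintegral_weight hs
          (hK.comp measurable_prodMk_left) hc hc_fin hx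
    _ = (∫⁻ t, c t ^ (1 - s) * ∫⁻ x, K x t ^ s ∂μ ∂ν) * (∫⁻ t, c t ∂ν) ^ (s - 1) := by
        rw [lintegral_mul_const _ weighted.lintegral_prod_right',
          lintegral_lintegral_swap weighted.aemeasurable]
        congr! with t
        exact lintegral_const_mul (c t ^ (1 - s)) (hK.of_uncurry_right.pow_const s)
    _ ≤ (∫⁻ t, c t ∂ν) * (∫⁻ t, c t ∂ν) ^ (s - 1) := by
        gcongr with t
        rw [c_rpow]
        exact rpow_one_sub_mul_rpow_le hs _
    _ = (∫⁻ t, c t ∂ν) ^ s := by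
        nth_rw 1 [← ENNReal.rpow_one (∫⁻ t, c t ∂ν)]
        rw [← ENNReal.rpow_add_of_nonneg _ _ zero_le_one (sub_nonneg.2 hs), add_sub_cancel]

end Minkowski

section Cubes

variable {d : ℕ}

theorem mem_cube_iff {α : Fin d → ℤ} {x : Fin d → ℝ} : x ∈ cube α ↔ (fun i => ⌊x i⌋) = α := by
  simp only [cube, Set.mem_univ_pi, Set.mem_Ico, funext_iff, Int.floor_eq_iff]

theorem measurableSet_cube (α : Fin d → ℤ) : MeasurableSet (cube α) :=
  MeasurableSet.univ_pi fun _ => measurableSet_Ico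

theorem volume_cube (α : Fin d → ℤ) : volume (cube α) = 1 := by
  simp [cube, volume_pi_pi]

instance isProbabilityMeasure_restrict_cube (α : Fin d → ℤ) :
    IsProbabilityMeasure (volume.restrict (cube α)) :=
  ⟨by rw [Measure.restrict_apply_univ, volume_cube]⟩

theorem iUnion_cube : ⋃ α : Fin d → ℤ, cube α = Set.univ :=
  Set.iUnion_eq_univ_iff.2 fun x => ⟨fun i => ⌊x i⌋, mem_cube_iff.2 rfl⟩

theorem pairwise_disjoint_cube : Pairwise (Function.onFun Disjoint (cube (d := d))) :=
  fun _ _ hne => Set.disjoint_left.2 fun _ hα hβ =>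
    hne ((mem_cube_iff.1 hα).symm.trans (mem_cube_iff.1 hβ))

theorem exists_sub_mem_cube {α : Fin d → ℤ} {x : Fin d → ℝ} (hx : x ∈ cube α) (t : Fin d → ℝ) :
    ∃ ε ∈ Finset.Icc (0 : Fin d → ℤ) 1, x - t ∈ cube (α - ((fun i => ⌊t i⌋) + ε)) := by
  have floor_eq (i : Fin d) : ⌊x i - t i + t i⌋ = α i := by
    rw [sub_add_cancel]
    exact congrFun (mem_cube_iff.1 hx) i
  have lower (i : Fin d) : ⌊x i - t i⌋ + ⌊t i⌋ ≤ α i :=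
    (Int.le_floor_add _ _).trans_eq (floor_eq i)
  have upper (i : Fin d) : α i - 1 ≤ ⌊x i - t i⌋ + ⌊t i⌋ :=
    floor_eq i ▸ Int.le_floor_add_floor (x i - t i) (t i)
  refine ⟨fun i => α i - ⌊t i⌋ - ⌊x i - t i⌋, Finset.mem_Icc.2 ⟨fun i => ?_, fun i => ?_⟩,
    mem_cube_iff.2 (funext fun i => ?_)⟩
  · have := lower i
    simp only [Pi.zero_apply]
    lia
  · have := upper i
    simp only [Pi.one_apply]
    lia
  · simp only [Pi.sub_apply, Pi.add_apply]
    lia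

theorem card_Icc_zero_one : (Finset.Icc (0 : Fin d → ℤ) 1).card = 2 ^ d := by
  simp [Pi.card_Icc]

theorem eLpNorm_comp_sub_restrict_cube_le {p : ℝ≥0∞} (hp : 1 ≤ p) {F : (Fin d → ℝ) → ℝ≥0∞}
    (hF : Measurable F) (t : Fin d → ℝ) (α : Fin d → ℤ) :
    eLpNorm (fun x => F (x - t)) p (volume.restrict (cube α)) ≤
      ∑ ε ∈ Finset.Icc (0 : Fin d → ℤ) 1,
        eLpNorm F p (volume.restrict (cube (α - ((fun i => ⌊t i⌋) + ε)))) := by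
  set piece : (Fin d → ℤ) → (Fin d → ℝ) → ℝ≥0∞ :=
    fun ε => (cube (α - ((fun i => ⌊t i⌋) + ε))).indicator F
  have hpiece (ε) : Measurable (piece ε) := hF.indicator (measurableSet_cube _)
  have le_sum_pieces {x} (hx : x ∈ cube α) :
      F (x - t) ≤ ∑ ε ∈ Finset.Icc (0 : Fin d → ℤ) 1, piece ε (x - t) := by
    obtain ⟨ε, hε, hmem⟩ := exists_sub_mem_cube hx t
    calc F (x - t) = piece ε (x - t) := (Set.indicator_of_mem hmem F).symm
      _ ≤ _ := Finset.single_le_sum (f := fun ε => piece ε (x - t)) (fun _ _ => zero_le) hε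
  calc eLpNorm (fun x => F (x - t)) p (volume.restrict (cube α))
      ≤ eLpNorm (∑ ε ∈ Finset.Icc (0 : Fin d → ℤ) 1, fun x => piece ε (x - t)) p
          (volume.restrict (cube α)) :=
        eLpNorm_mono_enorm_ae <| (ae_restrict_mem (measurableSet_cube α)).mono fun x hx => by
          simpa using le_sum_pieces hx
    _ ≤ ∑ ε ∈ Finset.Icc (0 : Fin d → ℤ) 1, eLpNorm (fun x => piece ε (x - t)) p volume :=
        (eLpNorm_restrict_le _ _ _ _).trans <| eLpNorm_sum_le
          (fun ε _ => ((hpiece ε).comp (measurable_sub_const t)).aestronglyMeasurable) hp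
    _ = _ := Finset.sum_congr rfl fun ε _ =>
        (eLpNorm_comp_measurePreserving (hpiece ε).aestronglyMeasurable
          (measurePreserving_sub_right volume t)).trans
          (eLpNorm_indicator_eq_eLpNorm_restrict (measurableSet_cube _))

end Cubes

section Amalgam

variable {d : ℕ} {E : Type*} [NormedAddCommGroup E] {p q : ℝ≥0∞}

/-- The unweighted amalgam norm of `(L^p, ℓ^q)` with extended exponents `p, q ∈ [0, ∞]`, written
as an iterated `eLpNorm` so that the `L^p` theory applies to the local and the global norm. -/
noncomputable def eAmalgamNorm {ε : Type*} [ENorm ε] (p q : ℝ≥0∞) (F : (Fin d → ℝ) → ε) : ℝ≥0∞ :=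
  eLpNorm (fun α : Fin d → ℤ => eLpNorm F p (volume.restrict (cube α))) q Measure.count

theorem amalgamNorm_eq_eAmalgamNorm {p q : ℝ} (hq : 0 < q) (ω : (Fin d → ℝ) → ℝ)
    (f : (Fin d → ℝ) → ℂ) :
    amalgamNorm p q ω f =
      eAmalgamNorm (ENNReal.ofReal p) (ENNReal.ofReal q) fun x => ω x • f x := by
  rw [eAmalgamNorm, eLpNorm_eq_lintegral_rpow_enorm_toReal (by simpa using hq)
    ENNReal.ofReal_ne_top, ENNReal.toReal_ofReal hq.le, lintegral_count]
  rfl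

theorem eAmalgamNorm_le_mul {ε ε' : Type*} [TopologicalSpace ε] [ContinuousENorm ε]
    [TopologicalSpace ε'] [ContinuousENorm ε'] {F : (Fin d → ℝ) → ε} {G : (Fin d → ℝ) → ε'}
    {c : ℝ≥0} (h : ∀ x, ‖F x‖ₑ ≤ c * ‖G x‖ₑ) :
    eAmalgamNorm p q F ≤ c * eAmalgamNorm p q G := by
  have on_cubes (α : Fin d → ℤ) : eLpNorm F p (volume.restrict (cube α)) ≤
      c * eLpNorm G p (volume.restrict (cube α)) :=
    eLpNorm_le_mul_eLpNorm_of_ae_le_mul' (ae_of_all _ h) p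
  refine eLpNorm_le_mul_eLpNorm_of_ae_le_mul' (Eventually.of_forall fun α => ?_) q
  simpa only [enorm_eq_self] using on_cubes α

theorem eAmalgamNorm_enorm (F : (Fin d → ℝ) → E) :
    eAmalgamNorm p q (fun x => ‖F x‖ₑ) = eAmalgamNorm p q F := by
  simp only [eAmalgamNorm, eLpNorm_enorm]

theorem eAmalgamNorm_mono {ε ε' : Type*} [ENorm ε] [ENorm ε'] {F : (Fin d → ℝ) → ε}
    {G : (Fin d → ℝ) → ε'} (h : ∀ x, ‖F x‖ₑ ≤ ‖G x‖ₑ) :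
    eAmalgamNorm p q F ≤ eAmalgamNorm p q G :=
  eLpNorm_mono_enorm fun _ => eLpNorm_mono_enorm h

theorem eAmalgamNorm_mono_exponent {p' : ℝ≥0∞} (h : p ≤ p') {F : (Fin d → ℝ) → E}
    (hF : AEStronglyMeasurable F) : eAmalgamNorm p q F ≤ eAmalgamNorm p' q F :=
  eLpNorm_mono_enorm fun _ => eLpNorm_le_eLpNorm_of_exponent_le h hF.restrict

theorem eAmalgamNorm_one_one (F : (Fin d → ℝ) → E) :
    eAmalgamNorm 1 1 F = eLpNorm F 1 volume := by
  simp only [eAmalgamNorm, eLpNorm_one_eq_lintegral_enorm, lintegral_count, enorm_eq_self]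
  rw [← lintegral_iUnion measurableSet_cube pairwise_disjoint_cube, iUnion_cube,
    Measure.restrict_univ]

theorem eAmalgamNorm_comp_sub_le (hp : 1 ≤ p) (hq : 1 ≤ q) {F : (Fin d → ℝ) → ℝ≥0∞}
    (hF : Measurable F) (t : Fin d → ℝ) :
    eAmalgamNorm p q (fun x => F (x - t)) ≤ 2 ^ d * eAmalgamNorm p q F := by
  set N : (Fin d → ℤ) → ℝ≥0∞ := fun α => eLpNorm F p (volume.restrict (cube α))
  have hN : Measurable N := measurable_of_countable N
  calc eAmalgamNorm p q (fun x => F (x - t))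
      ≤ eLpNorm (∑ ε ∈ Finset.Icc (0 : Fin d → ℤ) 1, fun α => N (α - ((fun i => ⌊t i⌋) + ε))) q
          Measure.count :=
        eLpNorm_mono_enorm fun α => by simpa using eLpNorm_comp_sub_restrict_cube_le hp hF t α
    _ ≤ ∑ ε ∈ Finset.Icc (0 : Fin d → ℤ) 1,
          eLpNorm (fun α => N (α - ((fun i => ⌊t i⌋) + ε))) q Measure.count :=
        eLpNorm_sum_le (fun _ _ => (measurable_of_countable _).aestronglyMeasurable) hq
    _ = ∑ _ε ∈ Finset.Icc (0 : Fin d → ℤ) 1, eAmalgamNorm p q F :=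
        Finset.sum_congr rfl fun ε _ => eLpNorm_comp_measurePreserving hN.aestronglyMeasurable
          (measurePreserving_sub_right Measure.count ((fun i => ⌊t i⌋) + ε))
    _ = 2 ^ d * eAmalgamNorm p q F := by simp [card_Icc_zero_one]

theorem eAmalgamNorm_lintegral_le {T : Type*} [MeasurableSpace T] {ν : Measure T} [SFinite ν]
    (hp : 1 ≤ p) (hp_top : p ≠ ∞) (hq : 1 ≤ q) (hq_top : q ≠ ∞) {K : (Fin d → ℝ) → T → ℝ≥0∞}
    (hK : Measurable (Function.uncurry K)) :
    eAmalgamNorm p q (fun x => ∫⁻ t, K x t ∂ν) ≤ ∫⁻ t, eAmalgamNorm p q (K · t) ∂ν := by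
  set N : (Fin d → ℤ) → T → ℝ≥0∞ := fun α t => eLpNorm (K · t) p (volume.restrict (cube α))
  have hN (α : Fin d → ℤ) : Measurable (N α) := measurable_eLpNorm_section hp_top hK
  have on_cubes (α : Fin d → ℤ) :
      eLpNorm (fun x => ∫⁻ t, K x t ∂ν) p (volume.restrict (cube α)) ≤ ∫⁻ t, N α t ∂ν :=
    eLpNorm_lintegral_le_lintegral_eLpNorm hp hp_top hK
  calc eAmalgamNorm p q (fun x => ∫⁻ t, K x t ∂ν)
      ≤ eLpNorm (fun α => ∫⁻ t, N α t ∂ν) q Measure.count := eLpNorm_mono_enorm fun α => by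
        simpa only [enorm_eq_self] using on_cubes α
    _ ≤ ∫⁻ t, eAmalgamNorm p q (K · t) ∂ν :=
        eLpNorm_lintegral_le_lintegral_eLpNorm hq hq_top (measurable_from_prod_countable_right hN)

theorem eAmalgamNorm_lconvolution_le (hp : 1 ≤ p) (hp_top : p ≠ ∞) (hq : 1 ≤ q) (hq_top : q ≠ ∞)
    {F : (Fin d → ℝ) → ℝ≥0∞} (hF : Measurable F) (ν : Measure (Fin d → ℝ)) [SFinite ν] :
    eAmalgamNorm p q (fun x => ∫⁻ t, F (x - t) ∂ν) ≤ 2 ^ d * eAmalgamNorm p q F * ν Set.univ :=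
  calc eAmalgamNorm p q (fun x => ∫⁻ t, F (x - t) ∂ν)
      ≤ ∫⁻ t, eAmalgamNorm p q (fun x => F (x - t)) ∂ν :=
        eAmalgamNorm_lintegral_le hp hp_top hq hq_top (hF.comp measurable_sub)
    _ ≤ ∫⁻ _, 2 ^ d * eAmalgamNorm p q F ∂ν :=
        lintegral_mono fun t => eAmalgamNorm_comp_sub_le hp hq hF t
    _ = 2 ^ d * eAmalgamNorm p q F * ν Set.univ := lintegral_const _

end Amalgam

section Weights

variable {d : ℕ} {ϑ : (Fin d → ℝ) → ℝ}

theorem IsBeurling.enorm_le_enorm_smul (hϑ : IsBeurling ϑ) (f : (Fin d → ℝ) → ℂ) (x : Fin d → ℝ) :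
    ‖f x‖ₑ ≤ ‖ϑ x • f x‖ₑ := by
  rw [enorm_le_iff_norm_le, norm_smul]
  exact le_mul_of_one_le_left (norm_nonneg _) ((hϑ.2.1 x).trans (le_abs_self _))

theorem IsBeurling.eLpNorm_one_le_eLpNorm_smul (hϑ : IsBeurling ϑ) (f : (Fin d → ℝ) → ℂ) :
    eLpNorm f 1 volume ≤ eLpNorm (fun x => ϑ x • f x) 1 volume :=
  eLpNorm_mono_enorm (hϑ.enorm_le_enorm_smul f)

theorem IsBeurling.enorm_add_le (hϑ : IsBeurling ϑ) (x y : Fin d → ℝ) :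
    ‖ϑ (x + y)‖ₑ ≤ ‖ϑ x‖ₑ * ‖ϑ y‖ₑ := by
  have pos (z) : 0 < ϑ z := zero_lt_one.trans_le (hϑ.2.1 z)
  rw [← enorm_mul, enorm_le_iff_norm_le, Real.norm_of_nonneg (pos _).le,
    Real.norm_of_nonneg (mul_pos (pos x) (pos y)).le]
  exact hϑ.2.2 x y

theorem IsBeurling.eLpNorm_one_le_amalgamNorm (hϑ : IsBeurling ϑ) {p : ℝ} (hp : 1 ≤ p)
    {f : (Fin d → ℝ) → ℂ} (hf : Measurable f) : eLpNorm f 1 volume ≤ amalgamNorm p 1 ϑ f :=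
  calc eLpNorm f 1 volume ≤ eLpNorm (fun x => ϑ x • f x) 1 volume :=
        hϑ.eLpNorm_one_le_eLpNorm_smul f
    _ = eAmalgamNorm 1 1 (fun x => ϑ x • f x) := (eAmalgamNorm_one_one _).symm
    _ ≤ eAmalgamNorm (ENNReal.ofReal p) 1 (fun x => ϑ x • f x) :=
        eAmalgamNorm_mono_exponent (by simpa using hp) (hϑ.1.smul hf).aestronglyMeasurable
    _ = amalgamNorm p 1 ϑ f := by
        rw [amalgamNorm_eq_eAmalgamNorm zero_lt_one, ENNReal.ofReal_one]

theorem IsBeurling.enorm_smul_convF_le (hϑ : IsBeurling ϑ) (f g : (Fin d → ℝ) → ℂ)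
    (x : Fin d → ℝ) :
    ‖ϑ x • convF f g x‖ₑ ≤ ∫⁻ t, ‖ϑ t • g t‖ₑ * ‖ϑ (x - t) • f (x - t)‖ₑ := by
  rw [convF, ← integral_smul]
  refine (enorm_integral_le_lintegral_enorm _).trans (lintegral_mono fun t => ?_)
  calc ‖ϑ x • (f (x - t) * g t)‖ₑ = ‖ϑ (x - t + t)‖ₑ * (‖f (x - t)‖ₑ * ‖g t‖ₑ) := by
        rw [sub_add_cancel, enorm_smul, enorm_mul]
    _ ≤ ‖ϑ (x - t)‖ₑ * ‖ϑ t‖ₑ * (‖f (x - t)‖ₑ * ‖g t‖ₑ) := by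
        gcongr
        exact hϑ.enorm_add_le _ _
    _ = ‖ϑ t • g t‖ₑ * ‖ϑ (x - t) • f (x - t)‖ₑ := by
        rw [enorm_smul, enorm_smul]
        ring

theorem IsBeurling.amalgamNorm_convF_le (hϑ : IsBeurling ϑ) {p q : ℝ} (hp : 1 ≤ p) (hq : 1 ≤ q)
    {f g : (Fin d → ℝ) → ℂ} (hf : Measurable f) (hg : Measurable g) :
    amalgamNorm p q ϑ (convF f g) ≤
      2 ^ d * amalgamNorm p q ϑ f * eLpNorm (fun x => ϑ x • g x) 1 volume := by
  have hq0 : 0 < q := zero_lt_one.trans_le hq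
  set F : (Fin d → ℝ) → ℝ≥0∞ := fun x => ‖ϑ x • f x‖ₑ
  set G : (Fin d → ℝ) → ℝ≥0∞ := fun x => ‖ϑ x • g x‖ₑ
  have hF : Measurable F := (hϑ.1.smul hf).enorm
  have hG : Measurable G := (hϑ.1.smul hg).enorm
  have mass : volume.withDensity G Set.univ = eLpNorm (fun x => ϑ x • g x) 1 volume := by
    rw [withDensity_apply _ .univ, Measure.restrict_univ, eLpNorm_one_eq_lintegral_enorm]
  have pointwise (x : Fin d → ℝ) :
      ‖ϑ x • convF f g x‖ₑ ≤ ∫⁻ t, F (x - t) ∂volume.withDensity G := by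
    have hFx : Measurable fun t => F (x - t) := hF.comp (measurable_const.sub measurable_id)
    rw [lintegral_withDensity_eq_lintegral_mul _ hG hFx]
    exact hϑ.enorm_smul_convF_le f g x
  rw [amalgamNorm_eq_eAmalgamNorm hq0, amalgamNorm_eq_eAmalgamNorm hq0, ← eAmalgamNorm_enorm,
    ← eAmalgamNorm_enorm fun x => ϑ x • f x, ← mass]
  calc eAmalgamNorm (ENNReal.ofReal p) (ENNReal.ofReal q) (fun x => ‖ϑ x • convF f g x‖ₑ)
      ≤ eAmalgamNorm (ENNReal.ofReal p) (ENNReal.ofReal q)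
          (fun x => ∫⁻ t, F (x - t) ∂volume.withDensity G) := eAmalgamNorm_mono pointwise
    _ ≤ 2 ^ d * eAmalgamNorm (ENNReal.ofReal p) (ENNReal.ofReal q) F *
          volume.withDensity G Set.univ :=
        eAmalgamNorm_lconvolution_le (by simpa using hp) ENNReal.ofReal_ne_top
          (by simpa using hq) ENNReal.ofReal_ne_top hF _

end Weights

section Fourier

variable {d : ℕ} {f g : (Fin d → ℝ) → ℂ}

theorem measurable_convF (hf : Measurable f) (hg : Measurable g) : Measurable (convF f g) :=
  ((hf.comp measurable_sub).mul (hg.comp measurable_snd)).stronglyMeasurable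
    |>.integral_prod_right'.measurable

theorem integral_convF (hf : Integrable f) (hg : Integrable g) :
    ∫ x, convF f g x = (∫ x, f x) * ∫ x, g x := by
  simpa only [convolution, ContinuousLinearMap.mul_apply', convF, mul_comm] using
    integral_convolution (μ := volume) (ν := volume) (ContinuousLinearMap.mul ℝ ℂ) hg hf

/-- The character `x ↦ e^{-2πi⟨x,ξ⟩}`, with the frequency `ξ` as first argument, against which
`fourierT` integrates. -/
noncomputable def fourierKernel (ξ x : Fin d → ℝ) : ℂ :=
  Complex.exp (-(2 * (Real.pi : ℂ) * Complex.I * ∑ i, (x i : ℂ) * (ξ i : ℂ)))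

theorem continuous_uncurry_fourierKernel :
    Continuous (Function.uncurry (fourierKernel (d := d))) := by
  unfold fourierKernel Function.uncurry
  fun_prop

theorem fourierKernel_add (ξ x y : Fin d → ℝ) :
    fourierKernel ξ (x + y) = fourierKernel ξ x * fourierKernel ξ y := by
  simp only [fourierKernel, ← Complex.exp_add, Pi.add_apply, Complex.ofReal_add, add_mul,
    Finset.sum_add_distrib, mul_add, neg_add]

theorem norm_fourierKernel (ξ x : Fin d → ℝ) : ‖fourierKernel ξ x‖ = 1 := by
  have : -(2 * (Real.pi : ℂ) * Complex.I * ∑ i, (x i : ℂ) * (ξ i : ℂ)) =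
      ((-(2 * Real.pi * ∑ i, x i * ξ i) : ℝ) : ℂ) * Complex.I := by
    push_cast
    ring
  rw [fourierKernel, this, Complex.norm_exp_ofReal_mul_I]

theorem integrable_fourierKernel_mul (hf : Integrable f) (ξ : Fin d → ℝ) :
    Integrable fun x => fourierKernel ξ x * f x :=
  hf.bdd_mul (c := 1)
    (continuous_uncurry_fourierKernel.comp (.prodMk_right ξ)).aestronglyMeasurable
    (Eventually.of_forall fun x => (norm_fourierKernel ξ x).le)

theorem convF_fourierKernel_mul (f g : (Fin d → ℝ) → ℂ) (ξ x : Fin d → ℝ) :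
    convF (fun y => fourierKernel ξ y * f y) (fun y => fourierKernel ξ y * g y) x =
      fourierKernel ξ x * convF f g x := by
  simp only [convF]
  rw [← integral_const_mul]
  refine integral_congr_ae (Eventually.of_forall fun t => ?_)
  calc fourierKernel ξ (x - t) * f (x - t) * (fourierKernel ξ t * g t)
      = fourierKernel ξ (x - t) * fourierKernel ξ t * (f (x - t) * g t) := by ring
    _ = fourierKernel ξ x * (f (x - t) * g t) := by rw [← fourierKernel_add, sub_add_cancel]

theorem fourierT_convF (hf : Integrable f) (hg : Integrable g) (ξ : Fin d → ℝ) :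
    fourierT (convF f g) ξ = fourierT f ξ * fourierT g ξ :=
  calc fourierT (convF f g) ξ
      = ∫ x, convF (fun y => fourierKernel ξ y * f y) (fun y => fourierKernel ξ y * g y) x := by
        simp only [convF_fourierKernel_mul]
        rfl
    _ = fourierT f ξ * fourierT g ξ :=
        integral_convF (integrable_fourierKernel_mul hf ξ) (integrable_fourierKernel_mul hg ξ)

theorem enorm_fourierT_le (f : (Fin d → ℝ) → ℂ) (ξ : Fin d → ℝ) :
    ‖fourierT f ξ‖ₑ ≤ eLpNorm f 1 volume := by
  rw [eLpNorm_one_eq_lintegral_enorm]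
  refine (enorm_integral_le_lintegral_enorm _).trans_eq (lintegral_congr fun x => ?_)
  change ‖fourierKernel ξ x * f x‖ₑ = ‖f x‖ₑ
  rw [enorm_mul, ← ofReal_norm, norm_fourierKernel, ENNReal.ofReal_one, one_mul]

theorem measurable_fourierT (hf : Measurable f) : Measurable (fourierT f) :=
  (continuous_uncurry_fourierKernel.measurable.mul (hf.comp measurable_snd)).stronglyMeasurable
    |>.integral_prod_right'.measurable

theorem amalgamNorm_fourierT_convF_le {q r : ℝ} (hr : 0 < r) (ω : (Fin d → ℝ) → ℝ)
    (hf : Integrable f) (hg : Integrable g) :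
    amalgamNorm q r ω (fourierT (convF f g)) ≤
      amalgamNorm q r ω (fourierT f) * eLpNorm g 1 volume := by
  have hg_fin : eLpNorm g 1 volume ≠ ∞ := (memLp_one_iff_integrable.2 hg).eLpNorm_ne_top
  rw [amalgamNorm_eq_eAmalgamNorm hr, amalgamNorm_eq_eAmalgamNorm hr, mul_comm,
    ← ENNReal.coe_toNNReal hg_fin]
  refine eAmalgamNorm_le_mul fun ξ => ?_
  calc ‖ω ξ • fourierT (convF f g) ξ‖ₑ = ‖fourierT g ξ‖ₑ * ‖ω ξ • fourierT f ξ‖ₑ := by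
        rw [fourierT_convF hf hg, mul_comm, ← mul_smul_comm, enorm_mul]
    _ ≤ (eLpNorm g 1 volume).toNNReal * ‖ω ξ • fourierT f ξ‖ₑ := by
        rw [ENNReal.coe_toNNReal hg_fin]
        gcongr
        exact enorm_fourierT_le g ξ

end Fourier

section Module

variable {d : ℕ} {p q r : ℝ} {ϑ ϑ₂ : (Fin d → ℝ) → ℝ} {f g : (Fin d → ℝ) → ℂ}

theorem MemA.integrable (hϑ : IsBeurling ϑ) (hp : 1 ≤ p) (hf : MemA p q r ϑ ϑ₂ f) :
    Integrable f :=
  memLp_one_iff_integrable.1 ⟨hf.1.1.aestronglyMeasurable,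
    (hϑ.eLpNorm_one_le_amalgamNorm hp hf.1.1).trans_lt hf.1.2⟩

theorem ANorm_convF_le (hϑ : IsBeurling ϑ) (hp : 1 ≤ p) (hr : 0 < r) (hf : MemA p q r ϑ ϑ₂ f)
    (hg : Measurable g) (hg_int : eLpNorm (fun x => ϑ x • g x) 1 volume < ∞) :
    ANorm p q r ϑ ϑ₂ (convF f g) ≤
      2 ^ d * ANorm p q r ϑ ϑ₂ f * eLpNorm (fun x => ϑ x • g x) 1 volume := by
  have hgϑ := hϑ.eLpNorm_one_le_eLpNorm_smul g
  have g_integrable : Integrable g :=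
    memLp_one_iff_integrable.1 ⟨hg.aestronglyMeasurable, hgϑ.trans_lt hg_int⟩
  have fourier_side : amalgamNorm q r ϑ₂ (fourierT (convF f g)) ≤
      2 ^ d * amalgamNorm q r ϑ₂ (fourierT f) * eLpNorm (fun x => ϑ x • g x) 1 volume :=
    (amalgamNorm_fourierT_convF_le hr ϑ₂ (hf.integrable hϑ hp) g_integrable).trans <| by
      gcongr
      exact le_mul_of_one_le_left zero_le (one_le_pow₀ one_le_two)
  calc ANorm p q r ϑ ϑ₂ (convF f g)
      ≤ 2 ^ d * amalgamNorm p 1 ϑ f * eLpNorm (fun x => ϑ x • g x) 1 volume +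
          2 ^ d * amalgamNorm q r ϑ₂ (fourierT f) * eLpNorm (fun x => ϑ x • g x) 1 volume :=
        add_le_add (hϑ.amalgamNorm_convF_le hp le_rfl hf.1.1 hg) fourier_side
    _ = 2 ^ d * ANorm p q r ϑ ϑ₂ f * eLpNorm (fun x => ϑ x • g x) 1 volume := by
        rw [ANorm, mul_add, add_mul]

theorem MemA.ANorm_lt_top (hf : MemA p q r ϑ ϑ₂ f) : ANorm p q r ϑ ϑ₂ f < ∞ :=
  ENNReal.add_lt_top.2 ⟨hf.1.2, hf.2.2⟩

theorem memA_of_ANorm_lt_top (hf : Measurable f) (h : ANorm p q r ϑ ϑ₂ f < ∞) :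
    MemA p q r ϑ ϑ₂ f :=
  ⟨⟨hf, (ENNReal.add_lt_top.1 h).1⟩, measurable_fourierT hf, (ENNReal.add_lt_top.1 h).2⟩

theorem eLpNorm_smul_le_mul_eLpNorm_smul {X E : Type*} {_ : MeasurableSpace X} {μ : Measure X}
    [NormedAddCommGroup E] [NormedSpace ℝ E] {u v : X → ℝ} {C : ℝ} (hC : 0 ≤ C)
    (hu : ∀ x, 0 ≤ u x) (huv : ∀ x, u x ≤ C * v x) (g : X → E) (s : ℝ≥0∞) :
    eLpNorm (fun x => u x • g x) s μ ≤ ENNReal.ofReal C * eLpNorm (fun x => v x • g x) s μ := by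
  refine eLpNorm_le_mul_eLpNorm_of_ae_le_mul (Eventually.of_forall fun x => ?_) s
  rw [norm_smul, norm_smul, ← mul_assoc, Real.norm_of_nonneg (hu x)]
  gcongr
  exact (huv x).trans (mul_le_mul_of_nonneg_left (le_abs_self _) hC)

end Module

theorem A_banach_module_general {d : ℕ} (p q r : ℝ) (hp : 1 ≤ p) (_hq : 0 < q) (hr : 0 < r)
    (ϑ₀ ϑ₁ ϑ₂ : (Fin d → ℝ) → ℝ) (h1 : IsBeurling ϑ₁) (hprec : Prec ϑ₁ ϑ₀) :
    ∃ C : ℝ, 0 < C ∧ ∀ f g : (Fin d → ℝ) → ℂ,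
      MemA p q r ϑ₁ ϑ₂ f → Measurable g →
      eLpNorm (fun x => ϑ₀ x • g x) 1 volume < ⊤ →
        MemA p q r ϑ₁ ϑ₂ (convF f g) ∧
        ANorm p q r ϑ₁ ϑ₂ (convF f g) ≤
          ENNReal.ofReal C * ANorm p q r ϑ₁ ϑ₂ f *
            eLpNorm (fun x => ϑ₀ x • g x) 1 volume := by
  obtain ⟨C, hC, hle⟩ := hprec
  refine ⟨2 ^ d * C, by positivity, fun f g hf hg hg_fin => ?_⟩
  have h1_nonneg (x) : 0 ≤ ϑ₁ x := zero_le_one.trans (h1.2.1 x)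
  have hdom := eLpNorm_smul_le_mul_eLpNorm_smul (μ := volume) hC.le h1_nonneg hle g 1
  have hbound : ANorm p q r ϑ₁ ϑ₂ (convF f g) ≤ ENNReal.ofReal (2 ^ d * C) *
      ANorm p q r ϑ₁ ϑ₂ f * eLpNorm (fun x => ϑ₀ x • g x) 1 volume :=
    calc ANorm p q r ϑ₁ ϑ₂ (convF f g)
        ≤ 2 ^ d * ANorm p q r ϑ₁ ϑ₂ f * eLpNorm (fun x => ϑ₁ x • g x) 1 volume :=
          ANorm_convF_le h1 hp hr hf hg
            (hdom.trans_lt (ENNReal.mul_lt_top ENNReal.ofReal_lt_top hg_fin))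
      _ ≤ 2 ^ d * ANorm p q r ϑ₁ ϑ₂ f *
            (ENNReal.ofReal C * eLpNorm (fun x => ϑ₀ x • g x) 1 volume) := by gcongr
      _ = _ := by
          rw [ENNReal.ofReal_mul (by positivity), ENNReal.ofReal_pow zero_le_two,
            ENNReal.ofReal_ofNat]
          ring
  refine ⟨memA_of_ANorm_lt_top (measurable_convF hf.1.1 hg) (hbound.trans_lt ?_), hbound⟩
  exact ENNReal.mul_lt_top (ENNReal.mul_lt_top ENNReal.ofReal_lt_top hf.ANorm_lt_top) hg_fin

/-- if `ϑ₁ ≺ ϑ₀` and `1 < p,q,r < ∞`, then `A^{p,1,q,r}_{ϑ₁,ϑ₂}(ℝ^d)`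
is a Banach `L¹_{ϑ₀}(ℝ^d)`-module under convolution. -/
theorem A_banach_module {d : ℕ} (p q r : ℝ) (hp : 1 < p) (hq : 1 < q) (hr : 1 < r)
    (ϑ₀ ϑ₁ ϑ₂ : (Fin d → ℝ) → ℝ) (h0 : IsBeurling ϑ₀) (h1 : IsBeurling ϑ₁)
    (h2 : IsBeurling ϑ₂) (hprec : Prec ϑ₁ ϑ₀) :
    ∃ C : ℝ, 0 < C ∧ ∀ f g : (Fin d → ℝ) → ℂ,
      MemA p q r ϑ₁ ϑ₂ f → Measurable g →
      eLpNorm (fun x => ϑ₀ x • g x) 1 volume < ⊤ →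
        MemA p q r ϑ₁ ϑ₂ (convF f g) ∧
        ANorm p q r ϑ₁ ϑ₂ (convF f g) ≤
          ENNReal.ofReal C * ANorm p q r ϑ₁ ϑ₂ f *
            eLpNorm (fun x => ϑ₀ x • g x) 1 volume := by
  exact A_banach_module_general p q r hp.le (one_pos.trans hq) (one_pos.trans hr) ϑ₀ ϑ₁ ϑ₂ h1 hprec
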